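/- Let n ≥ 6 be an even integer. Let M_n^− ∈ T^n be the matrix whose only nonzero entries are the four entries at positions (1, n−1), (1, n), (2, n−1), (2, n), each equal to 1, and let M_n^+ = ι(M_n^−). Then the 𝔊_n-orbits of M_n^+ and M_n^− are disjoint if and only if n ≡ 2 or 4 (mod 8). -/

import Mathlib

/-- `M ∈ T^n`: all entries strictly below the diagonal vanish. -/
def UpperTri (n : ℕ) (M : Matrix (Fin n) (Fin n) (ZMod 2)) : Prop :=
  ∀ i j : Fin n, (j : ℕ) < (i : ℕ) → M i j = 0

/-- The involution `ι : T^n → T^n`, `ι(M)_{ij} = M_{(n+1−j)(n+1−i)} + 1` for `i ≤ j`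
(one-based indexing; entries below the diagonal remain `0`). -/
def iotaT (n : ℕ) (M : Matrix (Fin n) (Fin n) (ZMod 2)) : Matrix (Fin n) (Fin n) (ZMod 2) :=
  Matrix.of fun i j => if (i : ℕ) ≤ (j : ℕ) then M (Fin.rev j) (Fin.rev i) + 1 else 0

/-- The height pairing `⟨M, R_k⟩ = ∑_{1 ≤ r ≤ k ≤ s ≤ n} M_{rs}`. -/
def heightPair (n : ℕ) (M : Matrix (Fin n) (Fin n) (ZMod 2)) (k : Fin n) : ZMod 2 :=
  ∑ r : Fin n, ∑ s : Fin n, if r ≤ k ∧ k ≤ s then M r s else 0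

/-- Safe entry lookup (zero outside range), with zero-based natural-number indices. -/
def ent (n : ℕ) (M : Matrix (Fin n) (Fin n) (ZMod 2)) (r s : ℕ) : ZMod 2 :=
  if h : r < n ∧ s < n then M ⟨r, h.1⟩ ⟨s, h.2⟩ else 0

/-- The generator `g_{ij}` of `𝔊_n` (here `i ≤ j` are zero-based, corresponding to the
one-based indices `i+1 ≤ j+1`): it adds the trace `M_{ij} + M_{i+1,j+1}` of the `2×2`
submatrix with rows `i, i+1` and columns `j, j+1` to each entry of that submatrix lying
in the upper triangle. -/
def gmove (n i j : ℕ) (M : Matrix (Fin n) (Fin n) (ZMod 2)) :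
    Matrix (Fin n) (Fin n) (ZMod 2) :=
  Matrix.of fun r s =>
    if ((r : ℕ) = i ∨ (r : ℕ) = i + 1) ∧ ((s : ℕ) = j ∨ (s : ℕ) = j + 1)
        ∧ (r : ℕ) ≤ (s : ℕ)
    then M r s + (ent n M i j + ent n M (i + 1) (j + 1))
    else M r s

/-- One application of a generator `g_{ij}`, `1 ≤ i ≤ j ≤ n−1` (one-based);
in zero-based indices `i ≤ j` and `j + 2 ≤ n`. -/
def Gstep (n : ℕ) (M M' : Matrix (Fin n) (Fin n) (ZMod 2)) : Prop :=
  ∃ i j : ℕ, i ≤ j ∧ j + 2 ≤ n ∧ M' = gmove n i j M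

/-- `N` belongs to the `𝔊_n`-orbit of `M`: the reflexive-transitive closure of the
generating moves (each generator is an involution, so this is the orbit equivalence). -/
def InOrbit (n : ℕ) (M N : Matrix (Fin n) (Fin n) (ZMod 2)) : Prop :=
  Relation.ReflTransGen (Gstep n) M N

/-- `M_n^−`: the matrix whose only nonzero entries are the four entries at (one-based)
positions `(1, n−1), (1, n), (2, n−1), (2, n)`, each equal to `1`. -/
def Mminus (n : ℕ) : Matrix (Fin n) (Fin n) (ZMod 2) :=
  Matrix.of fun r s => if (r : ℕ) ≤ 1 ∧ n - 2 ≤ (s : ℕ) then 1 else 0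

/-!
Lift matrices to formal sums of boxes over `𝔽₂`, where the box of `g_{ij}` is the set of entries
that `g_{ij}` alters. Taking the number of boxes covering an entry gives an injective map from
formal sums to matrices, and for a suitable quadratic form `Q` the generator `g_{ij}` lifts to the
transvection `x ↦ x + ⟨e, x⟩ e` along its box `e`, with `Q e = 1`.

For `n = 2m`, disjoint boxes (the tiles) tile the upper triangle. If `J` is the sum of all tiles
and `e` is the tile in the upper right corner, then `M⁻` lifts to `e` and `M⁺` to `J + e`. The
tiles are pairwise orthogonal and `J` is orthogonal to every box, so `Q (J + e) - Q e` is the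
parity of the number `m (m + 1) / 2` of tiles; if it is odd, the orbits differ.

If it is even, `J + e` is a sum of an odd number of tiles. Every such sum, except possibly `J`
itself, is a vanishing cycle: a tile may be exchanged for another because any two tiles are linked
by a vanishing cycle that meets no further tile, and a vanishing cycle meeting exactly four tiles
allows two tiles to be added. Finally, vanishing cycles that pair to `1` lie in the same orbit by
the braid relation, and any vanishing cycle linking `e` to another tile pairs to `1` with both `e`
and `J + e`.
-/

open QuadraticMap (polar polar_comm polar_add_left polar_add_right polar_smul_left polar_smul_right
  polar_self)

section Finset

variable {ι : Type*} [DecidableEq ι]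

lemma exchange_induction {P : Finset ι → Prop}
    (hP : ∀ B, ∀ i ∈ B, ∀ j ∉ B, P B → P (insert j (B.erase i))) {B C : Finset ι}
    (hBC : B.card = C.card) (hB : P B) : P C := by
  induction hk : (B \ C).card generalizing B with
  | zero =>
    rw [Finset.card_eq_zero, Finset.sdiff_eq_empty_iff_subset] at hk
    rwa [← Finset.eq_of_subset_of_card_le hk hBC.ge]
  | succ k ih =>
    obtain ⟨i, hi⟩ : (B \ C).Nonempty := Finset.card_pos.1 (by omega)
    obtain ⟨j, hj⟩ : (C \ B).Nonempty :=
      Finset.card_pos.1 (by rw [Finset.card_sdiff_comm hBC.symm]; omega)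
    rw [Finset.mem_sdiff] at hi hj
    refine ih ?_ (hP B i hi.1 j hj.2 hB) ?_
    · rw [Finset.card_insert_of_notMem (by simp [hj.2]), Finset.card_erase_add_one hi.1, hBC]
    · have : insert j (B.erase i) \ C = (B \ C).erase i := by
        rw [Finset.insert_sdiff_of_mem _ hj.1, Finset.erase_sdiff_comm]
      rw [this, Finset.card_erase_of_mem (Finset.mem_sdiff.2 hi), hk, Nat.add_sub_cancel]

lemma sum_symmDiff {V : Type*} [AddCommGroup V] [Module (ZMod 2) V] (B F : Finset ι) (a : ι → V) :
    ∑ k ∈ symmDiff B F, a k = ∑ k ∈ B, a k + ∑ k ∈ F, a k := by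
  rw [Finset.symmDiff_def, Finset.sum_union disjoint_sdiff_sdiff,
    ← Finset.sum_inter_add_sum_sdiff B F a, ← Finset.sum_inter_add_sum_sdiff F B a,
    Finset.inter_comm F B, add_add_add_comm, ZModModule.add_self, zero_add]

end Finset

section VanishingCycles

variable {V : Type*} [AddCommGroup V] [Module (ZMod 2) V] (Q : QuadraticForm (ZMod 2) V)

lemma polar_self_eq_zero (v : V) : polar Q v v = 0 := by
  rw [polar_self, CharTwo.two_nsmul]

lemma polar_sum_right {ι : Type*} (s : Finset ι) (v : V) (f : ι → V) :
    polar Q v (∑ i ∈ s, f i) = ∑ i ∈ s, polar Q v (f i) :=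
  map_sum (Q.polarBilin v) f s

/-- The Picard–Lefschetz transvection `x ↦ x + ⟨v, x⟩ v`, where `⟨·, ·⟩` is the polar form
of `Q`. -/
def picardLefschetz (v : V) : V →ₗ[ZMod 2] V :=
  LinearMap.transvection (Q.polarBilin v) v

lemma picardLefschetz_apply (v x : V) : picardLefschetz Q v x = x + polar Q v x • v := rfl

variable {Q} {u v : V}

lemma picardLefschetz_apply_of_polar_eq_one (h : polar Q v u = 1) :
    picardLefschetz Q v u = u + v := by
  rw [picardLefschetz_apply, h, one_smul]

lemma polar_picardLefschetz_self (v x : V) : polar Q v (picardLefschetz Q v x) = polar Q v x := by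
  rw [picardLefschetz_apply, polar_add_right, polar_comm Q v (_ • v), polar_smul_left,
    polar_self_eq_zero, smul_zero, add_zero]

lemma picardLefschetz_involutive (v : V) : Function.Involutive (picardLefschetz Q v) := by
  intro x
  rw [picardLefschetz_apply, polar_picardLefschetz_self, picardLefschetz_apply, add_assoc,
    ZModModule.add_self, add_zero]

lemma map_picardLefschetz (hv : Q v = 1) (x : V) : Q (picardLefschetz Q v x) = Q x := by
  rw [picardLefschetz_apply, QuadraticMap.map_add Q, QuadraticMap.map_smul, hv, polar_smul_right,
    polar_comm Q v x, smul_eq_mul, smul_eq_mul, mul_one, add_assoc, CharTwo.add_self_eq_zero,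
    add_zero]

lemma polar_picardLefschetz (u x y : V) :
    polar Q (picardLefschetz Q u x) (picardLefschetz Q u y) = polar Q x y := by
  have hux : polar Q x u = polar Q u x := polar_comm Q x u
  simp only [picardLefschetz_apply, polar_add_left, polar_add_right, polar_smul_left,
    polar_smul_right, polar_self_eq_zero, hux, smul_eq_mul]
  linear_combination CharTwo.add_self_eq_zero (polar Q u x * polar Q u y)

lemma picardLefschetz_conj (u v x : V) :
    picardLefschetz Q (picardLefschetz Q u v) (picardLefschetz Q u x) =
      picardLefschetz Q u (picardLefschetz Q v x) := by
  rw [picardLefschetz_apply, polar_picardLefschetz, picardLefschetz_apply Q v, map_add, map_smul]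

/-- `TransvectionOrbit Q E x y`: the vector `y` is obtained from `x` by finitely many
Picard–Lefschetz transvections along elements of `E`. -/
def TransvectionOrbit (Q : QuadraticForm (ZMod 2) V) (E : Set V) : V → V → Prop :=
  Relation.ReflTransGen fun x y => ∃ e ∈ E, picardLefschetz Q e x = y

/-- The vanishing cycles generated by `E`: the smallest set containing `E` and closed under
`u, v ↦ u + v = T_u v` whenever `⟨u, v⟩ = 1`. -/
inductive IsVanishingCycle (Q : QuadraticForm (ZMod 2) V) (E : Set V) : V → Prop
  | of_mem {e : V} : e ∈ E → IsVanishingCycle Q E e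
  | add {u v : V} : IsVanishingCycle Q E u → IsVanishingCycle Q E v → polar Q u v = 1 →
      IsVanishingCycle Q E (u + v)

variable {E : Set V} {x y : V}

namespace TransvectionOrbit

lemma symm (h : TransvectionOrbit Q E x y) : TransvectionOrbit Q E y x := by
  induction h with
  | refl => exact .refl
  | tail _ hstep ih =>
    obtain ⟨e, he, rfl⟩ := hstep
    exact .head ⟨e, he, picardLefschetz_involutive e _⟩ ih

lemma map_eq (hE : ∀ e ∈ E, Q e = 1) (h : TransvectionOrbit Q E x y) : Q y = Q x := by
  induction h with
  | refl => rfl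
  | tail _ hstep ih =>
    obtain ⟨e, he, rfl⟩ := hstep
    rw [map_picardLefschetz (hE e he), ih]

lemma mem_of_mem {W : Submodule (ZMod 2) V} (hE : E ⊆ W) (h : TransvectionOrbit Q E x y)
    (hx : x ∈ W) : y ∈ W := by
  induction h with
  | refl => exact hx
  | tail _ hstep ih =>
    obtain ⟨e, he, rfl⟩ := hstep
    exact W.add_mem ih (W.smul_mem _ (hE he))

end TransvectionOrbit

namespace IsVanishingCycle

lemma map_eq_one (hE : ∀ e ∈ E, Q e = 1) (hv : IsVanishingCycle Q E v) : Q v = 1 := by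
  induction hv with
  | of_mem he => exact hE _ he
  | add _ _ h ihu ihv => rw [QuadraticMap.map_add Q, ihu, ihv, h]; rfl

lemma polar_eq_zero {r : V} (hr : ∀ e ∈ E, polar Q e r = 0) (hv : IsVanishingCycle Q E v) :
    polar Q v r = 0 := by
  induction hv with
  | of_mem he => exact hr _ he
  | add _ _ _ ihu ihv => rw [polar_add_left, ihu, ihv, add_zero]

lemma transvectionOrbit_picardLefschetz (hv : IsVanishingCycle Q E v) (x : V) :
    TransvectionOrbit Q E x (picardLefschetz Q v x) := by
  induction hv generalizing x with
  | of_mem he => exact .single ⟨_, he, rfl⟩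
  | add _ _ h ihu ihv =>
    rw [add_comm, ← picardLefschetz_apply_of_polar_eq_one h, ← picardLefschetz_involutive _ x,
      picardLefschetz_conj, picardLefschetz_involutive _ x]
    exact ((ihu _).trans (ihv _)).trans (ihu _)

/-- The braid relation: `u ↦ u + v ↦ v` under `T_v` and then `T_u`. -/
lemma transvectionOrbit_of_polar_eq_one (hu : IsVanishingCycle Q E u)
    (hv : IsVanishingCycle Q E v) (h : polar Q u v = 1) : TransvectionOrbit Q E u v := by
  have hvu : picardLefschetz Q v u = u + v :=
    picardLefschetz_apply_of_polar_eq_one (by rw [polar_comm, h])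
  have huv : picardLefschetz Q u (u + v) = v := by
    rw [add_comm, ← picardLefschetz_apply_of_polar_eq_one h, picardLefschetz_involutive u v]
  have := (hv.transvectionOrbit_picardLefschetz u).trans
    (hu.transvectionOrbit_picardLefschetz _)
  rwa [hvu, huv] at this

end IsVanishingCycle

section IsotropicFamily

variable {ι : Type*} {a : ι → V}

/-- A family of pairwise orthogonal vanishing cycles. -/
structure IsIsotropicFamily (Q : QuadraticForm (ZMod 2) V) (E : Set V) (a : ι → V) : Prop where
  isVanishingCycle (i : ι) : IsVanishingCycle Q E (a i)
  polar_eq_zero (i j : ι) : polar Q (a i) (a j) = 0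

/-- `f` is the vector of pairings `⟨c, a i⟩` of some vanishing cycle `c` with the family `a`. -/
def IsPairingPattern (Q : QuadraticForm (ZMod 2) V) (E : Set V) (a : ι → V)
    (f : ι → ZMod 2) : Prop :=
  ∃ c, IsVanishingCycle Q E c ∧ ∀ k, polar Q c (a k) = f k

namespace IsIsotropicFamily

lemma polar_sum_right_eq_zero (ha : IsIsotropicFamily Q E a) (i : ι) (B : Finset ι) :
    polar Q (a i) (∑ k ∈ B, a k) = 0 := by
  rw [polar_sum_right]
  exact Finset.sum_eq_zero fun k _ => ha.polar_eq_zero i k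

lemma map_sum (ha : IsIsotropicFamily Q E a) (hE : ∀ e ∈ E, Q e = 1) (B : Finset ι) :
    Q (∑ i ∈ B, a i) = B.card := by
  classical
  induction B using Finset.induction_on with
  | empty => simp
  | insert i B hi ih =>
    rw [Finset.sum_insert hi, QuadraticMap.map_add Q, ih, ha.polar_sum_right_eq_zero,
      (ha.isVanishingCycle i).map_eq_one hE, Finset.card_insert_of_notMem hi]
    push_cast
    ring

lemma isPairingPattern_add (ha : IsIsotropicFamily Q E a) {f g : ι → ZMod 2} {i : ι}
    (hf : IsPairingPattern Q E a f) (hg : IsPairingPattern Q E a g) (hfi : f i = 1)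
    (hgi : g i = 1) : IsPairingPattern Q E a (f + g) := by
  obtain ⟨c, hc, hcf⟩ := hf
  obtain ⟨d, hd, hdg⟩ := hg
  have hcd_pattern (k : ι) : polar Q (c + d) (a k) = (f + g) k := by
    rw [polar_add_left, hcf, hdg, Pi.add_apply]
  obtain hcd | hcd : polar Q c d = 1 ∨ polar Q c d = 0 := by
    generalize polar Q c d = t
    revert t
    decide
  · exact ⟨c + d, hc.add hd hcd, hcd_pattern⟩
  -- Replacing `d` by `d + a i` keeps its pattern but changes `⟨c, d⟩`.
  · have hdi : IsVanishingCycle Q E (d + a i) :=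
      hd.add (ha.isVanishingCycle i) (by rw [hdg, hgi])
    refine ⟨c + (d + a i), hc.add hdi ?_, fun k => ?_⟩
    · rw [polar_add_right, hcd, hcf, hfi, zero_add]
    · rw [← add_assoc, polar_add_left, hcd_pattern, ha.polar_eq_zero, add_zero]

lemma isVanishingCycle_add_sum (ha : IsIsotropicFamily Q E a) {b d : V} {F : Finset ι}
    (hb : IsVanishingCycle Q E b) (hd : IsVanishingCycle Q E d) (hdb : polar Q d b = 1)
    (hba : ∀ i ∈ F, polar Q b (a i) = 0) (hda : ∀ i ∈ F, polar Q d (a i) = 1)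
    (hF : Even F.card) : IsVanishingCycle Q E (b + ∑ i ∈ F, a i) := by
  classical
  -- `b` itself is orthogonal to the `a i`; after adding `d` they can be added one at a time, and
  -- since `F` is even the result pairs to `1` with `d`, which can therefore be removed again.
  have partial_sum (F' : Finset ι) (hF' : F' ⊆ F) :
      IsVanishingCycle Q E (d + b + ∑ i ∈ F', a i) := by
    induction F' using Finset.induction_on with
    | empty => simpa using hd.add hb hdb
    | insert i F' hi ih =>
      have hiF : i ∈ F := hF' (Finset.mem_insert_self i F')
      rw [Finset.sum_insert hi, add_comm (a i), ← add_assoc]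
      refine (ih ((Finset.subset_insert i F').trans hF')).add (ha.isVanishingCycle i) ?_
      rw [polar_add_left, polar_add_left, hda i hiF, hba i hiF,
        polar_comm, ha.polar_sum_right_eq_zero, add_zero, add_zero]
  have hdF : polar Q d (∑ i ∈ F, a i) = 0 := by
    rw [polar_sum_right, Finset.sum_congr rfl hda, Finset.sum_const, nsmul_one,
      hF.natCast_zmod_two]
  have hsum := hd.add (partial_sum F Finset.Subset.rfl) (by
    rw [polar_add_right, polar_add_right, polar_self_eq_zero, hdb, hdF, zero_add, add_zero])
  rwa [← add_assoc, ← add_assoc, ZModModule.add_self, zero_add] at hsum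

end IsIsotropicFamily

variable [DecidableEq ι]

/-- Some vanishing cycle pairs nontrivially with exactly `a i` and `a j` among the family `a`
(with none of them if `i = j`). -/
def Linked (Q : QuadraticForm (ZMod 2) V) (E : Set V) (a : ι → V) (i j : ι) : Prop :=
  IsPairingPattern Q E a (Pi.single i 1 + Pi.single j 1)

lemma Linked.symm {i j : ι} (h : Linked Q E a i j) : Linked Q E a j i := by
  rwa [Linked, add_comm]

namespace IsIsotropicFamily

lemma linked_refl (ha : IsIsotropicFamily Q E a) (i : ι) : Linked Q E a i i := by
  refine ⟨a i, ha.isVanishingCycle i, fun k => ?_⟩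
  rw [ha.polar_eq_zero, Pi.add_apply, CharTwo.add_self_eq_zero]

lemma linked_trans (ha : IsIsotropicFamily Q E a) {i j k : ι} (hij : Linked Q E a i j)
    (hjk : Linked Q E a j k) : Linked Q E a i k := by
  obtain rfl | hij' := eq_or_ne i j
  · exact hjk
  obtain rfl | hjk' := eq_or_ne j k
  · exact hij
  have hadd := ha.isPairingPattern_add (i := j) hij hjk (by simp [hij']) (by simp [hjk'])
  rwa [add_assoc, ← add_assoc (Pi.single j 1), ZModModule.add_self, zero_add] at hadd

lemma isVanishingCycle_sum_symmDiff (ha : IsIsotropicFamily Q E a) {B F : Finset ι}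
    (hpattern : IsPairingPattern Q E a (∑ i ∈ F, Pi.single i 1)) (hF : Even F.card)
    (hBF : Odd (B ∩ F).card) (hB : IsVanishingCycle Q E (∑ k ∈ B, a k)) :
    IsVanishingCycle Q E (∑ k ∈ symmDiff B F, a k) := by
  obtain ⟨d, hd, hdF⟩ := hpattern
  have hd_apply (k : ι) : polar Q d (a k) = if k ∈ F then 1 else 0 := by
    rw [hdF, Finset.sum_apply, Finset.sum_pi_single]
  have hdB : polar Q d (∑ k ∈ B, a k) = 1 := by
    rw [polar_sum_right, Finset.sum_congr rfl fun k _ => hd_apply k, Finset.sum_ite_mem,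
      Finset.sum_const, nsmul_one, ZMod.natCast_eq_one_iff_odd]
    exact hBF
  rw [sum_symmDiff]
  refine ha.isVanishingCycle_add_sum hB hd hdB (fun k _ => ?_)
    (fun k hk => by rw [hd_apply, if_pos hk]) hF
  rw [polar_comm, ha.polar_sum_right_eq_zero]

lemma isVanishingCycle_sum_exchange (ha : IsIsotropicFamily Q E a) {i j : ι} {B : Finset ι}
    (hij : Linked Q E a i j) (hi : i ∈ B) (hj : j ∉ B)
    (hB : IsVanishingCycle Q E (∑ k ∈ B, a k)) :
    IsVanishingCycle Q E (∑ k ∈ insert j (B.erase i), a k) := by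
  have hne : i ≠ j := fun h => hj (h ▸ hi)
  have hsymmDiff : insert j (B.erase i) = symmDiff B {i, j} := by
    ext k
    grind [Finset.mem_symmDiff]
  have hinter : B ∩ {i, j} = {i} := by grind
  rw [hsymmDiff]
  refine ha.isVanishingCycle_sum_symmDiff ?_ ?_ ?_ hB
  · rwa [Finset.sum_pair hne]
  · rw [Finset.card_pair hne]
    exact even_two
  · rw [hinter, Finset.card_singleton]
    exact odd_one

variable [Fintype ι] {F : Finset ι}

lemma isVanishingCycle_sum_of_odd (ha : IsIsotropicFamily Q E a)
    (hlinked : ∀ i j, Linked Q E a i j) (hF : F.card = 4)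
    (hpattern : IsPairingPattern Q E a (∑ i ∈ F, Pi.single i 1)) {B : Finset ι}
    (hB : Odd B.card) (hBι : B.card < Fintype.card ι) :
    IsVanishingCycle Q E (∑ i ∈ B, a i) := by
  have of_card_eq {B C : Finset ι} :=
    exchange_induction (P := fun B => IsVanishingCycle Q E (∑ i ∈ B, a i)) (B := B) (C := C)
      fun B i hi j hj => ha.isVanishingCycle_sum_exchange (hlinked i j) hi hj
  obtain ⟨i, hi⟩ : F.Nonempty := Finset.card_pos.1 (by omega)
  obtain ⟨l, hl⟩ := hB
  induction l generalizing B with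
  | zero =>
    refine of_card_eq (B := {i}) (by simp [hl]) ?_
    rw [Finset.sum_singleton]
    exact ha.isVanishingCycle i
  | succ l ih =>
    -- `{i} ∪ C` with `C` outside `F` meets `F` in one element, so flipping by `F` adds two.
    obtain ⟨C, hCF, hC⟩ : ∃ C ⊆ Fᶜ, C.card = 2 * l :=
      Finset.exists_subset_card_eq (by rw [Finset.card_compl]; omega)
    have hdisj : Disjoint F C := Finset.subset_compl_iff_disjoint_left.1 hCF
    have hiC : i ∉ C := Finset.disjoint_left.1 hdisj hi
    have hcard : (insert i C).card = 2 * l + 1 := by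
      rw [Finset.card_insert_of_notMem hiC, hC]
    have hinter : insert i C ∩ F = {i} := by
      rw [Finset.insert_inter_of_mem hi, Finset.disjoint_iff_inter_eq_empty.1 hdisj.symm,
        insert_empty_eq]
    have hsymmDiff : symmDiff (insert i C) F = F.erase i ∪ C := by
      ext k
      have : k ∈ C → k ∉ F := fun hk => Finset.disjoint_right.1 hdisj hk
      grind [Finset.mem_symmDiff]
    refine of_card_eq (B := symmDiff (insert i C) F) ?_ ?_
    · rw [hsymmDiff, Finset.card_union_of_disjoint (hdisj.mono_left (F.erase_subset i)),
        Finset.card_erase_of_mem hi, hF, hC, hl]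
      ring
    · refine ha.isVanishingCycle_sum_symmDiff hpattern ?_ ?_ (ih (by omega) hcard)
      · rw [hF]
        decide
      · rw [hinter, Finset.card_singleton]
        exact odd_one

theorem transvectionOrbit_sum_add_iff (ha : IsIsotropicFamily Q E a) (hE : ∀ e ∈ E, Q e = 1)
    (hlinked : ∀ i j, Linked Q E a i j) (hF : F.card = 4)
    (hpattern : IsPairingPattern Q E a (∑ i ∈ F, Pi.single i 1))
    (hradical : ∀ e ∈ E, polar Q e (∑ i, a i) = 0) (i : ι) :
    TransvectionOrbit Q E (∑ k, a k + a i) (a i) ↔ Even (Fintype.card ι) := by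
  have hradical' {v : V} (hv : IsVanishingCycle Q E v) : polar Q v (∑ k, a k) = 0 :=
    hv.polar_eq_zero hradical
  have hQi : Q (a i) = 1 := (ha.isVanishingCycle i).map_eq_one hE
  constructor
  · intro h
    have hQ := h.map_eq hE
    rw [QuadraticMap.map_add Q, ha.map_sum hE, hQi, polar_comm,
      hradical' (ha.isVanishingCycle i), add_zero, right_eq_add, Finset.card_univ,
      ZMod.natCast_eq_zero_iff_even] at hQ
    exact hQ
  · intro heven
    have hcard : 4 ≤ Fintype.card ι := hF ▸ F.card_le_univ
    obtain ⟨j, hj⟩ : ∃ j, j ≠ i := Fintype.exists_ne_of_one_lt_card (by omega) i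
    obtain ⟨d, hd, hdij⟩ := hlinked i j
    have hdi : polar Q d (a i) = 1 := by simp [hdij, hj.symm]
    have herase : ∑ k, a k + a i = ∑ k ∈ Finset.univ.erase i, a k := by
      rw [← Finset.sum_erase_add _ a (Finset.mem_univ i), add_assoc, ZModModule.add_self, add_zero]
    have hsum : IsVanishingCycle Q E (∑ k, a k + a i) := by
      rw [herase]
      have := Finset.card_erase_add_one (Finset.mem_univ i)
      rw [Finset.card_univ] at this
      exact ha.isVanishingCycle_sum_of_odd hlinked hF hpattern (by grind) (by omega)
    exact (hsum.transvectionOrbit_of_polar_eq_one hd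
      (by rw [polar_comm, polar_add_right, hradical' hd, hdi, zero_add])).trans
      (hd.transvectionOrbit_of_polar_eq_one (ha.isVanishingCycle i) hdi)

end IsIsotropicFamily

end IsotropicFamily

end VanishingCycles
section Boxes

/-- Formal sums of boxes. The box with one-based index `(i + 1, j + 1)` is the one of the
generator `gmove n i j`; indexing from `1` lets the boxes of row or column `0` stand for the
missing neighbours of a matrix entry on the boundary. -/
abbrev BoxSpace : Type := ℕ × ℕ →₀ ZMod 2

/-- The basis vector of `BoxSpace` at `p`. -/
noncomputable def box (p : ℕ × ℕ) : BoxSpace := Finsupp.single p 1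

/-- The number modulo `2` of boxes covering the matrix entry with zero-based index `p`. -/
noncomputable def coverCount (p : ℕ × ℕ) : BoxSpace →ₗ[ZMod 2] ZMod 2 :=
  Finsupp.lapply p + Finsupp.lapply (p.1, p.2 + 1) + Finsupp.lapply (p.1 + 1, p.2) +
    Finsupp.lapply (p.1 + 1, p.2 + 1)

lemma coverCount_box (p q : ℕ × ℕ) :
    coverCount p (box q) =
      if (q.1 = p.1 ∨ q.1 = p.1 + 1) ∧ (q.2 = p.2 ∨ q.2 = p.2 + 1) then 1 else 0 := by
  simp only [coverCount, box, LinearMap.add_apply, Finsupp.lapply_apply, Finsupp.single_apply,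
    Prod.ext_iff]
  grind

/-- The bilinear form with `boxForm (box p) = coverCount p`. -/
noncomputable def boxForm : LinearMap.BilinForm (ZMod 2) BoxSpace :=
  Finsupp.linearCombination (ZMod 2) coverCount

lemma boxForm_box_left (p : ℕ × ℕ) (c : BoxSpace) : boxForm (box p) c = coverCount p c := by
  simp [boxForm, box]

lemma boxForm_box_right (i j : ℕ) (c : BoxSpace) :
    boxForm c (box (i + 1, j + 1)) = coverCount (i, j) c := by
  suffices boxForm.flip (box (i + 1, j + 1)) = coverCount (i, j) from LinearMap.congr_fun this c
  ext p
  change boxForm (box p) (box (i + 1, j + 1)) = coverCount (i, j) (box p)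
  rw [boxForm_box_left, coverCount_box, coverCount_box]
  grind

/-- The quadratic form of the box system: two boxes pair to `1` exactly when they are adjacent
horizontally, vertically or along the main diagonal direction. -/
noncomputable def boxQ : QuadraticForm (ZMod 2) BoxSpace :=
  LinearMap.BilinMap.toQuadraticMap boxForm

lemma boxQ_box (p : ℕ × ℕ) : boxQ (box p) = 1 := by
  simp [boxQ, LinearMap.BilinMap.toQuadraticMap_apply, boxForm_box_left, coverCount_box]

lemma polar_boxQ_box (i j : ℕ) (c : BoxSpace) :
    polar boxQ (box (i + 1, j + 1)) c = coverCount (i, j) c + coverCount (i + 1, j + 1) c := by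
  rw [boxQ, LinearMap.BilinMap.polar_toQuadraticMap, boxForm_box_left, boxForm_box_right, add_comm]

/-- The indices of the boxes of the generators of `𝔊_n`. -/
def boxRegion (n : ℕ) : Set (ℕ × ℕ) := {p | ∃ i j, i ≤ j ∧ j + 2 ≤ n ∧ p = (i + 1, j + 1)}

lemma mk_mem_boxRegion_iff {n i j : ℕ} : (i, j) ∈ boxRegion n ↔ 1 ≤ i ∧ i ≤ j ∧ j < n := by
  constructor
  · rintro ⟨i, j, hij, hj, h⟩
    grind
  · rintro ⟨hi, hij, hj⟩
    exact ⟨i - 1, j - 1, by grind⟩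

/-- The boxes of the generators of `𝔊_n`. -/
def boxes (n : ℕ) : Set BoxSpace := box '' boxRegion n

lemma box_mem_boxes {n i j : ℕ} (hij : i ≤ j) (hj : j + 2 ≤ n) : box (i + 1, j + 1) ∈ boxes n :=
  Set.mem_image_of_mem box ⟨i, j, hij, hj, rfl⟩

lemma boxQ_of_mem_boxes {n : ℕ} {e : BoxSpace} (he : e ∈ boxes n) : boxQ e = 1 := by
  obtain ⟨p, -, rfl⟩ := he
  exact boxQ_box p

lemma boxes_subset_supported (n : ℕ) :
    boxes n ⊆ Finsupp.supported (ZMod 2) (ZMod 2) (boxRegion n) :=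
  Set.image_subset_iff.2 fun _ hp => Finsupp.single_mem_supported (ZMod 2) 1 hp

/-- The matrix in `T^n` obtained by adding up the boxes of a formal sum, each filled with ones
on its part in the upper triangle. -/
noncomputable def boxSum (n : ℕ) : BoxSpace →ₗ[ZMod 2] Matrix (Fin n) (Fin n) (ZMod 2) where
  toFun c := Matrix.of fun r s => if r ≤ s then coverCount (r, s) c else 0
  map_add' c d := by
    ext r s
    simp only [Matrix.of_apply, Matrix.add_apply, map_add]
    split_ifs <;> simp
  map_smul' t c := by
    ext r s
    simp only [Matrix.of_apply, Matrix.smul_apply, map_smul]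
    split_ifs <;> simp

lemma boxSum_apply (n : ℕ) (c : BoxSpace) (r s : Fin n) :
    boxSum n c r s = if r ≤ s then coverCount (r, s) c else 0 := rfl

lemma ent_boxSum {n i j : ℕ} (hij : i ≤ j) (hj : j < n) (c : BoxSpace) :
    ent n (boxSum n c) i j = coverCount (i, j) c := by
  simp [ent, boxSum_apply, hij, hj, hij.trans_lt hj]

lemma gmove_boxSum {n i j : ℕ} (hij : i ≤ j) (hj : j + 2 ≤ n) (c : BoxSpace) :
    gmove n i j (boxSum n c) = boxSum n (picardLefschetz boxQ (box (i + 1, j + 1)) c) := by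
  have htrace : ent n (boxSum n c) i j + ent n (boxSum n c) (i + 1) (j + 1) =
      polar boxQ (box (i + 1, j + 1)) c := by
    rw [ent_boxSum hij (by omega), ent_boxSum (by omega) (by omega), polar_boxQ_box]
  ext r s
  have hbox : boxSum n (box (i + 1, j + 1)) r s =
      if ((r : ℕ) = i ∨ (r : ℕ) = i + 1) ∧ ((s : ℕ) = j ∨ (s : ℕ) = j + 1) ∧ (r : ℕ) ≤ (s : ℕ)
      then 1 else 0 := by
    rw [boxSum_apply, coverCount_box]
    grind
  rw [picardLefschetz_apply, map_add, map_smul, Matrix.add_apply, Matrix.smul_apply, hbox,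
    gmove, Matrix.of_apply, htrace]
  split_ifs <;> simp

lemma gstep_boxSum_iff {n : ℕ} {c : BoxSpace} {N : Matrix (Fin n) (Fin n) (ZMod 2)} :
    Gstep n (boxSum n c) N ↔ ∃ e ∈ boxes n, boxSum n (picardLefschetz boxQ e c) = N := by
  constructor
  · rintro ⟨i, j, hij, hj, rfl⟩
    exact ⟨_, box_mem_boxes hij hj, (gmove_boxSum hij hj c).symm⟩
  · rintro ⟨_, ⟨_, ⟨i, j, hij, hj, rfl⟩, rfl⟩, rfl⟩
    exact ⟨i, j, hij, hj, (gmove_boxSum hij hj c).symm⟩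

lemma inOrbit_boxSum_iff {n : ℕ} {c : BoxSpace} {N : Matrix (Fin n) (Fin n) (ZMod 2)} :
    InOrbit n (boxSum n c) N ↔
      ∃ d, TransvectionOrbit boxQ (boxes n) c d ∧ boxSum n d = N := by
  constructor
  · intro h
    induction h with
    | refl => exact ⟨c, .refl, rfl⟩
    | tail _ hstep ih =>
      obtain ⟨d, hd, rfl⟩ := ih
      obtain ⟨e, he, rfl⟩ := gstep_boxSum_iff.1 hstep
      exact ⟨_, hd.tail ⟨e, he, rfl⟩, rfl⟩
  · rintro ⟨d, hd, rfl⟩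
    induction hd with
    | refl => exact .refl
    | tail _ hstep ih =>
      obtain ⟨e, he, rfl⟩ := hstep
      exact ih.tail (gstep_boxSum_iff.2 ⟨e, he, rfl⟩)

lemma boxSum_injOn (n : ℕ) :
    Set.InjOn (boxSum n) (Finsupp.supported (ZMod 2) (ZMod 2) (boxRegion n)) := by
  rw [← LinearMap.disjoint_ker_iff_injOn, LinearMap.disjoint_ker]
  intro c hc h
  have hout (p : ℕ × ℕ) (hp : p ∉ boxRegion n) : c p = 0 :=
    Finsupp.notMem_support_iff.1 fun hcp => hp (hc hcp)
  have hcover (r s : ℕ) (hrs : r ≤ s) (hs : s < n) : coverCount (r, s) c = 0 := by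
    rw [← ent_boxSum hrs hs, h]
    simp [ent]
  -- Row by row, and from right to left in each row, entry `(r, s)` determines `c (r + 1, s)`.
  have hrow (r : ℕ) : ∀ s, c (r, s) = 0 := by
    induction r with
    | zero => exact fun s => hout _ (by grind [mk_mem_boxRegion_iff])
    | succ r ih =>
      have hright (k s : ℕ) (hk : s + k = n) : c (r + 1, s) = 0 := by
        induction k generalizing s with
        | zero => exact hout _ (by grind [mk_mem_boxRegion_iff])
        | succ k ihk =>
          by_cases hrs : r ≤ s
          · simpa [coverCount, ih, ihk (s + 1) (by omega)] using hcover r s hrs (by omega)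
          · exact hout _ (by grind [mk_mem_boxRegion_iff])
      intro s
      by_cases hs : s ≤ n
      · exact hright (n - s) s (by omega)
      · exact hout _ (by grind [mk_mem_boxRegion_iff])
  ext ⟨r, s⟩
  exact hrow r s

lemma disjoint_orbits_boxSum_iff {n : ℕ} {c d : BoxSpace}
    (hc : c ∈ Finsupp.supported (ZMod 2) (ZMod 2) (boxRegion n))
    (hd : d ∈ Finsupp.supported (ZMod 2) (ZMod 2) (boxRegion n)) :
    Disjoint {N | InOrbit n (boxSum n c) N} {N | InOrbit n (boxSum n d) N} ↔
      ¬TransvectionOrbit boxQ (boxes n) c d := by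
  rw [← not_iff_not, not_not, Set.not_disjoint_iff]
  simp only [Set.mem_ofPred_eq, inOrbit_boxSum_iff]
  constructor
  · rintro ⟨N, ⟨c', hcc', rfl⟩, d', hdd', h⟩
    obtain rfl : d' = c' := boxSum_injOn n (hdd'.mem_of_mem (boxes_subset_supported n) hd)
      (hcc'.mem_of_mem (boxes_subset_supported n) hc) h
    exact hcc'.trans hdd'.symm
  · intro hcd
    exact ⟨boxSum n d, ⟨d, hcd, rfl⟩, d, .refl, rfl⟩

end Boxes

section Tiling

/-- Indices of the tiling of the upper triangle of a `2m × 2m` matrix by `2 × 2` boxes. -/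
abbrev Tile (m : ℕ) : Type := {p : Fin m × Fin m // p.1 ≤ p.2}

lemma card_tile (m : ℕ) : Fintype.card (Tile m) = (m + 1).choose 2 := by
  rw [← Fintype.card_congr Sym2.sortEquiv, Sym2.card, Fintype.card_fin]

variable {m : ℕ}

/-- The tile containing the matrix entry `(r, s)`. -/
def tileAt (r s : ℕ) (hrs : r ≤ s) (hs : s < 2 * m) : Tile m :=
  ⟨(⟨r / 2, by omega⟩, ⟨s / 2, by omega⟩), Nat.div_le_div_right hrs⟩

/-- The box of a tile. -/
noncomputable def tileBox (k : Tile m) : BoxSpace := box (2 * k.1.1 + 1, 2 * k.1.2 + 1)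

lemma tile_mem_boxRegion (k : Tile m) :
    (2 * (k.1.1 : ℕ) + 1, 2 * (k.1.2 : ℕ) + 1) ∈ boxRegion (2 * m) :=
  ⟨_, _, Nat.mul_le_mul_left 2 k.2, by omega, rfl⟩

lemma tileBox_mem_boxes (k : Tile m) : tileBox k ∈ boxes (2 * m) :=
  Set.mem_image_of_mem box (tile_mem_boxRegion k)

lemma coverCount_tileBox {r s : ℕ} (hrs : r ≤ s) (hs : s < 2 * m) (k : Tile m) :
    coverCount (r, s) (tileBox k) = (Pi.single (tileAt r s hrs hs) 1 : Tile m → ZMod 2) k := by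
  rw [tileBox, coverCount_box, Pi.single_apply]
  simp only [tileAt, Subtype.ext_iff, Prod.ext_iff, Fin.ext_iff]
  exact if_congr (by omega) rfl rfl

lemma coverCount_sum_tileBox {r s : ℕ} (hrs : r ≤ s) (hs : s < 2 * m) :
    coverCount (r, s) (∑ k : Tile m, tileBox k) = 1 := by
  simp [coverCount_tileBox hrs hs]

lemma polar_box_tileBox {i j : ℕ} (hij : i ≤ j) (hj : j + 2 ≤ 2 * m) (k : Tile m) :
    polar boxQ (box (i + 1, j + 1)) (tileBox k) =
      (Pi.single (tileAt i j hij (by omega)) 1 +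
        Pi.single (tileAt (i + 1) (j + 1) (by omega) (by omega)) 1 : Tile m → ZMod 2) k := by
  rw [polar_boxQ_box, coverCount_tileBox hij (by omega),
    coverCount_tileBox (Nat.succ_le_succ hij) (by omega), Pi.add_apply]

lemma linked_tileAt_succ {i j : ℕ} (hij : i ≤ j) (hj : j + 2 ≤ 2 * m) :
    Linked boxQ (boxes (2 * m)) tileBox (tileAt (m := m) i j hij (by omega))
      (tileAt (i + 1) (j + 1) (by omega) (by omega)) :=
  ⟨_, .of_mem (box_mem_boxes hij hj), polar_box_tileBox hij hj⟩

lemma isIsotropicFamily_tileBox : IsIsotropicFamily boxQ (boxes (2 * m)) (tileBox (m := m)) where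
  isVanishingCycle k := .of_mem (tileBox_mem_boxes k)
  polar_eq_zero k l := by
    have htile : tileAt (m := m) (2 * k.1.1) (2 * k.1.2) (Nat.mul_le_mul_left 2 k.2) (by omega) =
        tileAt (2 * k.1.1 + 1) (2 * k.1.2 + 1) (by have := k.2; omega) (by omega) := by
      simp only [tileAt, Subtype.mk.injEq, Prod.mk.injEq, Fin.mk.injEq]
      omega
    rw [tileBox, polar_box_tileBox (Nat.mul_le_mul_left 2 k.2) (by omega), htile, Pi.add_apply,
      CharTwo.add_self_eq_zero]

lemma polar_sum_tileBox {e : BoxSpace} (he : e ∈ boxes (2 * m)) :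
    polar boxQ e (∑ k : Tile m, tileBox k) = 0 := by
  obtain ⟨_, ⟨i, j, hij, hj, rfl⟩, rfl⟩ := he
  rw [polar_boxQ_box, coverCount_sum_tileBox hij (by omega),
    coverCount_sum_tileBox (Nat.succ_le_succ hij) (by omega), CharTwo.add_self_eq_zero]

lemma linked_tileAt_zero (s : ℕ) (hs : s < 2 * m) : ∀ r (hrs : r ≤ s),
    Linked boxQ (boxes (2 * m)) tileBox (tileAt 0 0 le_rfl (by omega)) (tileAt r s hrs hs) := by
  induction s with
  | zero =>
    intro r hrs
    obtain rfl := Nat.le_zero.1 hrs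
    exact isIsotropicFamily_tileBox.linked_refl _
  | succ s ih =>
    have succ_row (r : ℕ) (hrs : r ≤ s) : Linked boxQ (boxes (2 * m)) tileBox
        (tileAt 0 0 le_rfl (by omega)) (tileAt (r + 1) (s + 1) (by omega) hs) :=
      isIsotropicFamily_tileBox.linked_trans (ih (by omega) r hrs)
        (linked_tileAt_succ hrs (by omega))
    intro r hrs
    cases r with
    | zero => exact succ_row 0 (Nat.zero_le s)
    | succ r => exact succ_row r (Nat.le_of_succ_le_succ hrs)

lemma linked_tile (k l : Tile m) : Linked boxQ (boxes (2 * m)) tileBox k l := by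
  have linked_zero (k : Tile m) : Linked boxQ (boxes (2 * m)) tileBox
      (tileAt 0 0 le_rfl (by have := k.1.1.2; omega)) k := by
    have htile : tileAt (2 * k.1.1) (2 * k.1.2) (Nat.mul_le_mul_left 2 k.2) (by omega) = k := by
      simp [tileAt]
    exact htile ▸ linked_tileAt_zero _ _ _ _
  exact isIsotropicFamily_tileBox.linked_trans (linked_zero k).symm (linked_zero l)

lemma exists_card_eq_four_isPairingPattern (hm : 3 ≤ m) : ∃ F : Finset (Tile m), F.card = 4 ∧
    IsPairingPattern boxQ (boxes (2 * m)) tileBox (∑ k ∈ F, Pi.single k 1) := by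
  let t₀₀ : Tile m := tileAt 0 0 (by omega) (by omega)
  let t₀₁ : Tile m := tileAt 0 2 (by omega) (by omega)
  let t₁₁ : Tile m := tileAt 2 2 (by omega) (by omega)
  let t₁₂ : Tile m := tileAt 2 4 (by omega) (by omega)
  have hne : t₀₀ ∉ ({t₀₁, t₁₁, t₁₂} : Finset (Tile m)) ∧ t₀₁ ∉ ({t₁₁, t₁₂} : Finset (Tile m)) ∧
      t₁₁ ≠ t₁₂ := by
    simp [t₀₀, t₀₁, t₁₁, t₁₂, tileAt]
  -- The three boxes link `t₀₁` to each of the other tiles, so `t₀₁` is met three times.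
  refine ⟨{t₀₀, t₀₁, t₁₁, t₁₂}, ?_, box (1, 2) + box (2, 3) + box (2, 4), ?_, fun k => ?_⟩
  · rw [Finset.card_insert_of_notMem hne.1, Finset.card_insert_of_notMem hne.2.1,
      Finset.card_pair hne.2.2]
  · refine .add (.add (.of_mem (box_mem_boxes (by omega) (by omega)))
      (.of_mem (box_mem_boxes (by omega) (by omega))) ?_)
      (.of_mem (box_mem_boxes (by omega) (by omega))) ?_
    · simp [polar_boxQ_box, coverCount_box]
    · simp [polar_boxQ_box, coverCount_box, polar_add_left]
  · rw [Finset.sum_insert hne.1, Finset.sum_insert hne.2.1, Finset.sum_pair hne.2.2,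
      polar_add_left, polar_add_left, polar_box_tileBox (by omega) (by omega),
      polar_box_tileBox (by omega) (by omega), polar_box_tileBox (by omega) (by omega)]
    change (Pi.single t₀₀ 1 + Pi.single t₀₁ 1 : Tile m → ZMod 2) k +
      (Pi.single t₀₁ 1 + Pi.single t₁₁ 1 : Tile m → ZMod 2) k +
      (Pi.single t₀₁ 1 + Pi.single t₁₂ 1 : Tile m → ZMod 2) k = _
    simp only [Pi.add_apply]
    linear_combination CharTwo.add_self_eq_zero ((Pi.single t₀₁ 1 : Tile m → ZMod 2) k)

lemma boxSum_tileBox_eq_Mminus (hm : 2 ≤ m) :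
    boxSum (2 * m) (tileBox (tileAt 0 (2 * m - 1) (by omega) (by omega) : Tile m)) =
      Mminus (2 * m) := by
  ext r s
  rw [boxSum_apply, tileBox, coverCount_box, Mminus, Matrix.of_apply]
  simp only [tileAt, Nat.zero_div, mul_zero, zero_add, Nat.right_eq_add,
    Nat.add_right_cancel_iff, tsub_le_iff_right]
  grind

lemma iotaT_Mminus (n : ℕ) (r s : Fin n) :
    iotaT n (Mminus n) r s = if r ≤ s then Mminus n r s + 1 else 0 := by
  simp only [iotaT, Fin.val_fin_le, Mminus, tsub_le_iff_right, Matrix.of_apply, Fin.val_rev]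
  grind

lemma boxSum_sum_tileBox_add (c : BoxSpace) (r s : Fin (2 * m)) :
    boxSum (2 * m) (∑ k : Tile m, tileBox k + c) r s =
      if r ≤ s then boxSum (2 * m) c r s + 1 else 0 := by
  simp only [boxSum_apply]
  split_ifs with hrs
  · rw [map_add, coverCount_sum_tileBox hrs s.2, add_comm]
  · rfl

end Tiling

lemma odd_choose_succ_two_iff (m : ℕ) :
    Odd ((m + 1).choose 2) ↔ 2 * m % 8 = 2 ∨ 2 * m % 8 = 4 := by
  have hdouble : 2 * (m + 1).choose 2 = (m + 1) * m := by
    rw [Nat.choose_two_right, Nat.add_sub_cancel]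
    exact Nat.mul_div_cancel' (by simpa [mul_comm] using (Nat.even_mul_succ_self m).two_dvd)
  have hmod : 2 * (m + 1).choose 2 % 4 = (m % 4 + 1) * (m % 4) % 4 := by
    simp [hdouble, Nat.mul_mod, Nat.add_mod]
  have hlt : m % 4 < 4 := Nat.mod_lt m (by decide)
  rw [Nat.odd_iff]
  interval_cases h : m % 4 <;> omega

theorem orbits_Mpm_disjoint_iff (n : ℕ) (hn : 6 ≤ n) (heven : n % 2 = 0) :
    Disjoint {N | InOrbit n (iotaT n (Mminus n)) N} {N | InOrbit n (Mminus n) N} ↔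
      (n % 8 = 2 ∨ n % 8 = 4) := by
  obtain ⟨m, rfl⟩ := Nat.dvd_of_mod_eq_zero heven
  obtain ⟨F, hF, hpattern⟩ := exists_card_eq_four_isPairingPattern (m := m) (by omega)
  let corner : Tile m := tileAt 0 (2 * m - 1) (by omega) (by omega)
  have hcorner : tileBox corner ∈ Finsupp.supported (ZMod 2) (ZMod 2) (boxRegion (2 * m)) :=
    boxes_subset_supported _ (tileBox_mem_boxes corner)
  have hminus : Mminus (2 * m) = boxSum (2 * m) (tileBox corner) :=
    (boxSum_tileBox_eq_Mminus (by omega)).symm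
  have hplus : iotaT (2 * m) (Mminus (2 * m)) =
      boxSum (2 * m) (∑ k : Tile m, tileBox k + tileBox corner) := by
    ext r s
    rw [iotaT_Mminus, boxSum_sum_tileBox_add, hminus]
  rw [hplus, hminus, disjoint_orbits_boxSum_iff (add_mem (sum_mem fun k _ =>
      boxes_subset_supported _ (tileBox_mem_boxes k)) hcorner) hcorner,
    isIsotropicFamily_tileBox.transvectionOrbit_sum_add_iff (fun _ => boxQ_of_mem_boxes)
      linked_tile hF hpattern (fun _ => polar_sum_tileBox), card_tile, Nat.not_even_iff_odd,
    odd_choose_succ_two_iff]
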